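/- Let m : ℝ² → ℝ be a smooth, nowhere-vanishing function of (x,t) satisfying the KdV equation m_t + m_xxx − 6m·m_x = 0. Let y : ℝ² → ℝ be smooth with y_x(x,t) = m(x,t) and y_t(x,t) = 3m(x,t)² − m_xx(x,t) for all (x,t), and let M : ℝ² → ℝ be a smooth function of (y,T) such that M(y(x,t), t) = m(x,t) for all (x,t). Then the RKdV equation M_T + (M³(M_yy − 1))_y = 0 holds at every point of the form (y(x,t), t). -/

import Mathlib

noncomputable section

/-- Partial derivative of `f` with respect to its first argument. -/
def d1 (f : ℝ → ℝ → ℝ) : ℝ → ℝ → ℝ := fun a b => deriv (fun a' => f a' b) a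

/-- Partial derivative of `f` with respect to its second argument. -/
def d2 (f : ℝ → ℝ → ℝ) : ℝ → ℝ → ℝ := fun a b => deriv (fun b' => f a b') b

/-- Smoothness of a two-variable real function. -/
def Smooth2 (f : ℝ → ℝ → ℝ) : Prop := ContDiff ℝ (⊤ : ℕ∞) (fun p : ℝ × ℝ => f p.1 p.2)

/-!
A conservation law `m_t = F_x` is turned by `dy = m dx + F dt`, `T = t` into
`M_T + Φ M_y - M Φ_y = 0`, where `Φ` is the flux `F` expressed in the variables `(y, T)`.
Since `∂_x` becomes `M ∂_y`, the KdV flux `F = 3m² - m_xx` becomes `Φ = 3M² - (M ∂_y)² M`, and for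
this `Φ` the expression `Φ M_y - M Φ_y` is the exact derivative `(M³(M_yy - 1))_y`.
-/

open Function (uncurry)

section PartialDerivatives

variable {f : ℝ → ℝ → ℝ} {a b : ℝ}

theorem d1_eq_fderiv (hf : DifferentiableAt ℝ (uncurry f) (a, b)) :
    d1 f a b = fderiv ℝ (uncurry f) (a, b) (1, 0) :=
  (hf.hasFDerivAt.comp_hasDerivAt (f := fun a' => (a', b)) a
    ((hasDerivAt_id' a).prodMk (hasDerivAt_const a b))).deriv

theorem d2_eq_fderiv (hf : DifferentiableAt ℝ (uncurry f) (a, b)) :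
    d2 f a b = fderiv ℝ (uncurry f) (a, b) (0, 1) :=
  (hf.hasFDerivAt.comp_hasDerivAt (f := fun b' => (a, b')) b
    ((hasDerivAt_const b a).prodMk (hasDerivAt_id' b))).deriv

theorem hasDerivAt_comp_curve {u v : ℝ → ℝ} {u' v' s : ℝ}
    (hf : DifferentiableAt ℝ (uncurry f) (u s, v s))
    (hu : HasDerivAt u u' s) (hv : HasDerivAt v v' s) :
    HasDerivAt (fun r => f (u r) (v r))
      (d1 f (u s) (v s) * u' + d2 f (u s) (v s) * v') s := by
  have hchain := hf.hasFDerivAt.comp_hasDerivAt s (hu.prodMk hv)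
  have hsplit : ((u', v') : ℝ × ℝ) = u' • ((1, 0) : ℝ × ℝ) + v' • ((0, 1) : ℝ × ℝ) := by simp
  rw [hsplit, map_add, map_smul, map_smul, ← d1_eq_fderiv hf, ← d2_eq_fderiv hf, smul_eq_mul,
    smul_eq_mul, mul_comm u', mul_comm v'] at hchain
  exact hchain

theorem hasDerivAt_d1 (hf : DifferentiableAt ℝ (uncurry f) (a, b)) :
    HasDerivAt (fun a' => f a' b) (d1 f a b) a := by
  simpa only [mul_one, mul_zero, add_zero] using
    hasDerivAt_comp_curve (u := fun a' => a') hf (hasDerivAt_id' a) (hasDerivAt_const a b)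

theorem hasDerivAt_d2 (hf : DifferentiableAt ℝ (uncurry f) (a, b)) :
    HasDerivAt (fun b' => f a b') (d2 f a b) b := by
  simpa only [mul_one, mul_zero, zero_add] using
    hasDerivAt_comp_curve (v := fun b' => b') hf (hasDerivAt_const b a) (hasDerivAt_id' b)

theorem contDiff_d1 {n k : WithTop ℕ∞} (hf : ContDiff ℝ n (uncurry f)) (hkn : k + 1 ≤ n) :
    ContDiff ℝ k (uncurry (d1 f)) := by
  have hn : n ≠ 0 := fun h => by simp [h] at hkn
  have heq : uncurry (d1 f) = fun p => fderiv ℝ (uncurry f) p (1, 0) :=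
    funext fun p => d1_eq_fderiv (hf.differentiable hn p)
  rw [heq]
  exact (hf.fderiv_right hkn).clm_apply contDiff_const

end PartialDerivatives

theorem d1_kdvFlux {m : ℝ → ℝ → ℝ} {x t : ℝ} (hm : DifferentiableAt ℝ (fun x' => m x' t) x)
    (hmxx : DifferentiableAt ℝ (fun x' => d1 (d1 m) x' t) x) :
    d1 (fun x t => 3 * m x t ^ 2 - d1 (d1 m) x t) x t
      = 6 * m x t * d1 m x t - d1 (d1 (d1 m)) x t := by
  refine (((hm.hasDerivAt.pow 2).const_mul 3).sub hmxx.hasDerivAt).deriv.trans ?_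
  simp only [d1]
  ring

section ReciprocalTransformation

/-- The operator `M ∂_y`, which is `∂_x` expressed in reciprocal coordinates with `y_x = M`. -/
def reciprocalD (M f : ℝ → ℝ → ℝ) : ℝ → ℝ → ℝ := fun a b => M a b * d1 f a b

/-- The KdV flux `3m² - m_xx` expressed through `M` in reciprocal coordinates. -/
def reciprocalKdVFlux (M : ℝ → ℝ → ℝ) : ℝ → ℝ → ℝ :=
  fun a b => 3 * M a b ^ 2 - reciprocalD M (reciprocalD M M) a b

variable {y M f Φ : ℝ → ℝ → ℝ}

theorem contDiff_reciprocalD {n k : WithTop ℕ∞} (hM : ContDiff ℝ k (uncurry M))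
    (hf : ContDiff ℝ n (uncurry f)) (hkn : k + 1 ≤ n) :
    ContDiff ℝ k (uncurry (reciprocalD M f)) :=
  hM.mul (contDiff_d1 hf hkn)

theorem contDiff_reciprocalD_reciprocalD {n k : WithTop ℕ∞} (hM : ContDiff ℝ n (uncurry M))
    (hkn : k + 2 ≤ n) : ContDiff ℝ k (uncurry (reciprocalD M (reciprocalD M M))) := by
  have hk1n : k + 1 + 1 ≤ n := by rwa [add_assoc, one_add_one_eq_two]
  exact contDiff_reciprocalD (hM.of_le (le_self_add.trans hkn))
    (contDiff_reciprocalD (hM.of_le (le_self_add.trans hk1n)) hM hk1n) le_rfl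

theorem contDiff_reciprocalKdVFlux {n k : WithTop ℕ∞} (hM : ContDiff ℝ n (uncurry M))
    (hkn : k + 2 ≤ n) : ContDiff ℝ k (uncurry (reciprocalKdVFlux M)) :=
  (contDiff_const.mul ((hM.of_le (le_self_add.trans hkn)).pow 2)).sub
    (contDiff_reciprocalD_reciprocalD hM hkn)

theorem hasDerivAt_comp_reciprocal {x t : ℝ} (hf : DifferentiableAt ℝ (uncurry f) (y x t, t))
    (hyx : HasDerivAt (fun x' => y x' t) (M (y x t) t) x) :
    HasDerivAt (fun x' => f (y x' t) t) (reciprocalD M f (y x t) t) x := by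
  simpa only [reciprocalD, mul_zero, add_zero, mul_comm] using
    hasDerivAt_comp_curve (u := fun x' => y x' t) hf hyx (hasDerivAt_const x t)

theorem d1_comp_reciprocal (hf : Differentiable ℝ (uncurry f))
    (hyx : ∀ x t, HasDerivAt (fun x' => y x' t) (M (y x t) t) x) :
    d1 (fun x t => f (y x t) t) = fun x t => reciprocalD M f (y x t) t :=
  funext₂ fun x t => (hasDerivAt_comp_reciprocal (hf _) (hyx x t)).deriv

theorem d1_d1_comp_reciprocal (hM : ContDiff ℝ 2 (uncurry M))
    (hyx : ∀ x t, HasDerivAt (fun x' => y x' t) (M (y x t) t) x) :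
    d1 (d1 fun x t => M (y x t) t) = fun x t => reciprocalD M (reciprocalD M M) (y x t) t := by
  have hDM : ContDiff ℝ 1 (uncurry (reciprocalD M M)) :=
    contDiff_reciprocalD (hM.of_le (by norm_num)) hM (by norm_num)
  rw [d1_comp_reciprocal (hM.differentiable two_ne_zero) hyx,
    d1_comp_reciprocal (hDM.differentiable one_ne_zero) hyx]

theorem conservationLaw_reciprocal {x t : ℝ} (hM : DifferentiableAt ℝ (uncurry M) (y x t, t))
    (hΦ : DifferentiableAt ℝ (uncurry Φ) (y x t, t))
    (hyx : HasDerivAt (fun x' => y x' t) (M (y x t) t) x)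
    (hyt : HasDerivAt (fun t' => y x t') (Φ (y x t) t) t) :
    d2 (fun x t => M (y x t) t) x t - d1 (fun x t => Φ (y x t) t) x t
      = d2 M (y x t) t + (Φ (y x t) t * d1 M (y x t) t - M (y x t) t * d1 Φ (y x t) t) := by
  have hm_t : d2 (fun x t => M (y x t) t) x t
      = d1 M (y x t) t * Φ (y x t) t + d2 M (y x t) t * 1 :=
    (hasDerivAt_comp_curve (v := fun t' => t') hM hyt (hasDerivAt_id' t)).deriv
  have hF_x : d1 (fun x t => Φ (y x t) t) x t = M (y x t) t * d1 Φ (y x t) t :=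
    (hasDerivAt_comp_reciprocal hΦ hyx).deriv
  rw [hm_t, hF_x]
  ring

theorem d1_rkdvFlux (hM : ContDiff ℝ 3 (uncurry M)) (a b : ℝ) :
    d1 (fun a b => M a b ^ 3 * (d1 (d1 M) a b - 1)) a b
      = reciprocalKdVFlux M a b * d1 M a b - M a b * d1 (reciprocalKdVFlux M) a b := by
  have hM1 : ContDiff ℝ 2 (uncurry (d1 M)) := contDiff_d1 hM (by norm_num)
  have hM2 : ContDiff ℝ 1 (uncurry (d1 (d1 M))) := contDiff_d1 hM1 (by norm_num)
  have dM (c) : HasDerivAt (fun a' => M a' b) (d1 M c b) c :=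
    hasDerivAt_d1 (hM.differentiable (by norm_num) _)
  have dM1 (c) : HasDerivAt (fun a' => d1 M a' b) (d1 (d1 M) c b) c :=
    hasDerivAt_d1 (hM1.differentiable (by norm_num) _)
  have dM2 : HasDerivAt (fun a' => d1 (d1 M) a' b) (d1 (d1 (d1 M)) a b) a :=
    hasDerivAt_d1 (hM2.differentiable (by norm_num) _)
  have hD (c) : d1 (reciprocalD M M) c b = d1 M c b * d1 M c b + M c b * d1 (d1 M) c b :=
    ((dM c).mul (dM1 c)).deriv
  have hΦ (c) : reciprocalKdVFlux M c b
      = 3 * M c b ^ 2 - M c b * (d1 M c b * d1 M c b + M c b * d1 (d1 M) c b) := by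
    rw [reciprocalKdVFlux, reciprocalD, hD]
  have hΦ_y : d1 (reciprocalKdVFlux M) a b
      = 6 * M a b * d1 M a b - d1 M a b ^ 3 - 4 * M a b * d1 M a b * d1 (d1 M) a b
        - M a b ^ 2 * d1 (d1 (d1 M)) a b := by
    simp only [d1.eq_def (reciprocalKdVFlux M), hΦ]
    refine ((((dM a).fun_pow 2).const_mul 3).fun_sub ((dM a).fun_mul
      (((dM1 a).fun_mul (dM1 a)).fun_add ((dM a).fun_mul dM2)))).deriv.trans ?_
    ring
  have hlhs : d1 (fun a b => M a b ^ 3 * (d1 (d1 M) a b - 1)) a b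
      = 3 * M a b ^ 2 * d1 M a b * (d1 (d1 M) a b - 1) + M a b ^ 3 * d1 (d1 (d1 M)) a b :=
    (((dM a).fun_pow 3).fun_mul (dM2.sub_const 1)).deriv.trans (by ring)
  rw [hlhs, hΦ_y, hΦ]
  ring

end ReciprocalTransformation

theorem reciprocal_KdV_to_RKdV_general {m y M : ℝ → ℝ → ℝ} (hM : ContDiff ℝ 3 (uncurry M))
    (hyx : ∀ x t, HasDerivAt (fun x' => y x' t) (m x t) x)
    (hyt : ∀ x t, HasDerivAt (fun t' => y x t') (3 * m x t ^ 2 - d1 (d1 m) x t) t)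
    (hMm : ∀ x t, M (y x t) t = m x t) (x t : ℝ) :
    d2 M (y x t) t + d1 (fun a b => M a b ^ 3 * (d1 (d1 M) a b - 1)) (y x t) t
      = d2 m x t + d1 (d1 (d1 m)) x t - 6 * m x t * d1 m x t := by
  have hm : m = fun x t => M (y x t) t := funext₂ fun x t => (hMm x t).symm
  simp only [← hMm] at hyx
  have hm_xx : d1 (d1 m) = fun x t => reciprocalD M (reciprocalD M M) (y x t) t :=
    hm ▸ d1_d1_comp_reciprocal (hM.of_le (by norm_num)) hyx
  have hflux : (fun x t => reciprocalKdVFlux M (y x t) t)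
      = fun x t => 3 * m x t ^ 2 - d1 (d1 m) x t := by
    simp only [reciprocalKdVFlux, hMm, hm_xx]
  have hyt_flux : HasDerivAt (fun t' => y x t') (reciprocalKdVFlux M (y x t) t) t :=
    (congrFun₂ hflux x t) ▸ hyt x t
  have hk : (1 : WithTop ℕ∞) + 2 ≤ 3 := by norm_num
  have hM_diff : Differentiable ℝ (uncurry M) := hM.differentiable (by norm_num)
  have hm_diff : DifferentiableAt ℝ (fun x' => m x' t) x := by
    rw [hm]
    exact (hasDerivAt_comp_reciprocal (hM_diff _) (hyx x t)).differentiableAt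
  have hm_xx_diff : DifferentiableAt ℝ (fun x' => d1 (d1 m) x' t) x := by
    rw [hm_xx]
    exact (hasDerivAt_comp_reciprocal
      ((contDiff_reciprocalD_reciprocalD hM hk).differentiable one_ne_zero _)
      (hyx x t)).differentiableAt
  have hlaw := conservationLaw_reciprocal (hM_diff _)
    ((contDiff_reciprocalKdVFlux hM hk).differentiable one_ne_zero _) (hyx x t) hyt_flux
  rw [d1_rkdvFlux hM, ← hlaw, hflux, ← hm, d1_kdvFlux hm_diff hm_xx_diff]
  ring

/-- the reciprocal transformation `dy = m·dx + (3m² − m_xx)dt`, `T = t`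
turns a nowhere-vanishing solution `m` of KdV into a solution `M` of RKdV. -/
theorem reciprocal_KdV_to_RKdV (m y M : ℝ → ℝ → ℝ)
    (hm : Smooth2 m) (hy : Smooth2 y) (hM : Smooth2 M)
    (hne : ∀ x t, m x t ≠ 0)
    (hKdV : ∀ x t, d2 m x t + d1 (d1 (d1 m)) x t - 6 * m x t * d1 m x t = 0)
    (hyx : ∀ x t, d1 y x t = m x t)
    (hyt : ∀ x t, d2 y x t = 3 * (m x t) ^ 2 - d1 (d1 m) x t)
    (hMm : ∀ x t, M (y x t) t = m x t) :
    ∀ x t,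
      d2 M (y x t) t
        + d1 (fun a b => (M a b) ^ 3 * (d1 (d1 M) a b - 1)) (y x t) t = 0 := by
  have hy_diff : Differentiable ℝ (uncurry y) := ContDiff.differentiable hy (by simp)
  exact fun x t => (reciprocal_KdV_to_RKdV_general (contDiff_infty.1 hM 3)
    (fun x t => hyx x t ▸ hasDerivAt_d1 (hy_diff _))
    (fun x t => hyt x t ▸ hasDerivAt_d2 (hy_diff _)) hMm x t).trans (hKdV x t)
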